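/- arXiv:2309.02164 — 2 statements merged into one kernel-verified Lean document; each statement's English description precedes it below -/
import Mathlib

section
/- Let X be a metric space with a Borel probability measure λ, let (x_j)_{j∈J} be a finite family of points of X, and let C > 0 and 0 < δ. Write N_η(A) for the open η-neighborhood of A ⊆ X, N_{−η}(A) for the complement of N_η(X \ A), M_δ g (x) = sup of g over the open ball of radius δ about x, and m_δ g (x) = inf of g over that ball. Suppose that for every subset B ⊆ X, (1−δ)·λ(N_{−δ}(B)) ≤ #{j ∈ J : x_j ∈ B} / C ≤ (1+δ)·λ(N_δ(B)). Then for every bounded nonnegative Borel function g : X → ℝ, (1−δ)·∫ m_δ(g) dλ ≤ (1/C)·Σ_{j∈J} g(x_j) ≤ (1+δ)·∫ M_δ(g) dλ. (Here m_δ(g) is upper semicontinuous and M_δ(g) is lower semicontinuous, hence both are Borel measurable.) -/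
open MeasureTheory

/-- The open `η`-neighborhood of a set `A` in a metric space:
the union of the open balls of radius `η` centered at points of `A`. -/
def nbhd {X : Type*} [MetricSpace X] (η : ℝ) (A : Set X) : Set X :=
  ⋃ a ∈ A, Metric.ball a η

theorem layer_aux {α : Type*} [MeasurableSpace α] (μ : Measure α) [IsFiniteMeasure μ]
    (f : α → ℝ) (hf : Measurable f) (M : ℝ) (h0 : ∀ a, 0 ≤ f a) (hM : ∀ a, f a ≤ M) :
    ∫ a, f a ∂μ = ∫ t in Set.Ioc 0 M, μ.real {a | t ≤ f a} ∧
    IntegrableOn (fun t => μ.real {a | t ≤ f a}) (Set.Ioc 0 M) := by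
  constructor
  · refine Integrable.integral_eq_integral_Ioc_meas_le ?_ (Filter.Eventually.of_forall h0)
      (Filter.Eventually.of_forall hM)
    refine Integrable.of_bound hf.aestronglyMeasurable M (Filter.Eventually.of_forall fun a => ?_)
    rw [Real.norm_eq_abs, abs_of_nonneg (h0 a)]
    exact hM a
  · have h : Antitone (fun t => μ.real {a | t ≤ f a}) := by
      intro s t hst
      exact measureReal_mono (fun a (ha : t ≤ f a) => hst.trans ha)
    exact ((h.locallyIntegrable (μ := volume)).integrableOn_isCompact
      (isCompact_Icc (a := 0) (b := M))).mono_set Set.Ioc_subset_Icc_self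

theorem mem_nbhd_iff {X : Type*} [MetricSpace X] (η : ℝ) (A : Set X) (z : X) :
    z ∈ nbhd η A ↔ ∃ a ∈ Metric.ball z η, a ∈ A := by
  simp only [nbhd, Set.mem_iUnion, exists_prop]
  constructor
  · rintro ⟨a, ha, h⟩
    exact ⟨a, Metric.mem_ball_comm.1 h, ha⟩
  · rintro ⟨a, h, ha⟩
    exact ⟨a, ha, Metric.mem_ball_comm.1 h⟩

theorem isOpen_nbhd_aux {X : Type*} [MetricSpace X] (η : ℝ) (A : Set X) : IsOpen (nbhd η A) :=
  isOpen_biUnion fun _ _ => Metric.isOpen_ball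

/-- From the set-level equidistribution
`(1−δ)·λ(N_{−δ}B) ≤ #{j : x j ∈ B}/C ≤ (1+δ)·λ(N_δ B)` (for all `B ⊆ X`),
deduce the function-level equidistribution
`(1−δ)·∫ m_δ(g) dλ ≤ (1/C)·Σ_j g (x j) ≤ (1+δ)·∫ M_δ(g) dλ`
for every bounded nonnegative Borel `g`, where `m_δ g x` (resp. `M_δ g x`) is the inf
(resp. sup) of `g` over the open ball of radius `δ` about `x`. -/
theorem stmt3 {X : Type*} [MetricSpace X] [MeasurableSpace X] [BorelSpace X]
    (lam : Measure X) [IsProbabilityMeasure lam]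
    {J : Type*} [Fintype J] (x : J → X)
    (C δ : ℝ) (hC : 0 < C) (hδ : 0 < δ)
    (hequi : ∀ B : Set X,
      (1 - δ) * (lam ((nbhd δ Bᶜ)ᶜ)).toReal ≤ (Nat.card {j : J // x j ∈ B} : ℝ) / C ∧
      (Nat.card {j : J // x j ∈ B} : ℝ) / C ≤ (1 + δ) * (lam (nbhd δ B)).toReal)
    (g : X → ℝ) (hg : Measurable g) (hg0 : ∀ z, 0 ≤ g z)
    (Cg : ℝ) (hgb : ∀ z, g z ≤ Cg) :
    (1 - δ) * (∫ z, sInf (g '' Metric.ball z δ) ∂lam) ≤ (∑ j, g (x j)) / C ∧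
    (∑ j, g (x j)) / C ≤ (1 + δ) * ∫ z, sSup (g '' Metric.ball z δ) ∂lam := by
  have hne : ∀ z, (g '' Metric.ball z δ).Nonempty := fun z =>
    ⟨g z, z, Metric.mem_ball_self hδ, rfl⟩
  have hbb : ∀ z, BddBelow (g '' Metric.ball z δ) := fun z =>
    ⟨0, by rintro _ ⟨a, _, rfl⟩; exact hg0 a⟩
  have hba : ∀ z, BddAbove (g '' Metric.ball z δ) := fun z =>
    ⟨Cg, by rintro _ ⟨a, _, rfl⟩; exact hgb a⟩
  have hinf : ∀ t z, sInf (g '' Metric.ball z δ) < t ↔ z ∈ nbhd δ {a | g a < t} := by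
    intro t z
    rw [csInf_lt_iff (hbb z) (hne z), mem_nbhd_iff, Set.exists_mem_image]
    rfl
  have hsup : ∀ t z, t < sSup (g '' Metric.ball z δ) ↔ z ∈ nbhd δ {a | t < g a} := by
    intro t z
    rw [lt_csSup_iff (hba z) (hne z), mem_nbhd_iff, Set.exists_mem_image]
    rfl
  have hm : Measurable fun z => sInf (g '' Metric.ball z δ) := by
    refine measurable_of_Iio fun t => ?_
    convert (isOpen_nbhd_aux δ {a | g a < t}).measurableSet using 1
    ext z
    exact hinf t z
  have hM : Measurable fun z => sSup (g '' Metric.ball z δ) := by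
    refine measurable_of_Ioi fun t => ?_
    convert (isOpen_nbhd_aux δ {a | t < g a}).measurableSet using 1
    ext z
    exact hsup t z
  let _ : MeasurableSpace J := ⊤
  have : DiscreteMeasurableSpace J := ⟨fun _ => trivial⟩
  obtain ⟨e1, i1⟩ := layer_aux lam _ hm Cg
    (fun z => le_csInf (hne z) (by rintro _ ⟨a, _, rfl⟩; exact hg0 a))
    (fun z => (csInf_le (hbb z) ⟨z, Metric.mem_ball_self hδ, rfl⟩).trans (hgb z))
  obtain ⟨e2, i2⟩ := layer_aux lam _ hM Cg
    (fun z => (hg0 z).trans (le_csSup (hba z) ⟨z, Metric.mem_ball_self hδ, rfl⟩))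
    (fun z => csSup_le (hne z) (by rintro _ ⟨a, _, rfl⟩; exact hgb a))
  obtain ⟨e3, i3⟩ := layer_aux (Measure.count : Measure J) (fun j => g (x j))
    (measurable_of_finite _) Cg (fun j => hg0 _) (fun j => hgb _)
  have hcount : ∀ t, (Measure.count : Measure J).real {j | t ≤ g (x j)} =
      (Nat.card {j : J // x j ∈ {a | t ≤ g a}} : ℝ) := by
    intro t
    rw [measureReal_def, Measure.count_apply (MeasurableSet.of_discrete)]
    rw [← Set.Finite.cast_ncard_eq (Set.toFinite _), ← Nat.card_coe_set_eq,
      ENat.toENNReal_coe, ENNReal.toReal_natCast]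
    rfl
  rw [integral_count] at e3
  rw [e1, e2, e3, ← integral_const_mul, ← integral_const_mul, ← integral_div]
  constructor
  · refine setIntegral_mono (i1.const_mul _) (i3.div_const _) fun t => ?_
    have h := (hequi {a | t ≤ g a}).1
    rw [← hcount] at h
    have hc : {a | t ≤ g a}ᶜ = {a | g a < t} := by ext; simp
    have hs : {z | t ≤ sInf (g '' Metric.ball z δ)} = (nbhd δ {a | t ≤ g a}ᶜ)ᶜ := by
      ext z
      rw [hc, Set.mem_compl_iff, ← hinf t z, not_lt]
      rfl
    rw [← hs] at h
    exact h
  · refine setIntegral_mono (i3.div_const _) (i2.const_mul _) fun t => ?_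
    have h := (hequi {a | t ≤ g a}).2
    rw [← hcount] at h
    refine h.trans (mul_le_mul_of_nonneg_left ?_ (by linarith))
    refine measureReal_mono fun z hz => ?_
    obtain ⟨a, ha, hta⟩ := (mem_nbhd_iff _ _ _).1 hz
    exact le_trans hta (le_csSup (hba z) ⟨a, ha, rfl⟩)
end

section
/- Let X be a metric space with a Borel probability measure λ, let (x_j)_{j∈J} be a finite family of points of X, and let C > 0 and 0 < δ < 1. Write N_η(A) for the open η-neighborhood of A and N_{−η}(A) for the complement of N_η(X \ A). Suppose that for every subset B ⊆ X, (1−δ)·λ(N_{−δ}(B)) ≤ #{j ∈ J : x_j ∈ B} / C ≤ (1+δ)·λ(N_δ(B)). Then the open δ-neighborhood of the point set F = {x_j : j ∈ J} has full λ-measure; consequently, if in addition λ(U) > 0 for every nonempty open U ⊆ X, then for every r > δ the open r-neighborhood N_r(F) equals all of X. -/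
open MeasureTheory

/-- If the finite point family `(x j)` satisfies the set-level equidistribution at scale
`δ < 1`, then the open `δ`-neighborhood of the point set `F = range x` has full measure;
consequently, if moreover `λ` is positive on every nonempty open set, then for every
`r > δ` the open `r`-neighborhood of `F` is all of `X`. -/
theorem stmt14 {X : Type*} [MetricSpace X] [MeasurableSpace X] [BorelSpace X]
    (lam : Measure X) [IsProbabilityMeasure lam]
    {J : Type*} [Fintype J] (x : J → X)
    (C δ : ℝ) (hC : 0 < C) (hδ0 : 0 < δ) (hδ1 : δ < 1)
    (hequi : ∀ B : Set X,
      (1 - δ) * (lam ((nbhd δ Bᶜ)ᶜ)).toReal ≤ (Nat.card {j : J // x j ∈ B} : ℝ) / C ∧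
      (Nat.card {j : J // x j ∈ B} : ℝ) / C ≤ (1 + δ) * (lam (nbhd δ B)).toReal) :
    lam ((nbhd δ (Set.range x))ᶜ) = 0 ∧
    ((∀ U : Set X, IsOpen U → U.Nonempty → 0 < lam U) →
      ∀ r > δ, nbhd r (Set.range x) = Set.univ) := by
  have h0 : lam ((nbhd δ (Set.range x))ᶜ) = 0 := by
    have h := (hequi (Set.range x)ᶜ).1
    have hE : IsEmpty {j : J // x j ∈ (Set.range x)ᶜ} :=
      ⟨fun j => j.2 (Set.mem_range_self j.1)⟩
    rw [compl_compl, Nat.card_of_isEmpty, Nat.cast_zero, zero_div] at h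
    have h1 : (lam ((nbhd δ (Set.range x))ᶜ)).toReal ≤ 0 := by
      by_contra hc
      push Not at hc
      have := mul_pos (sub_pos.2 hδ1) hc
      linarith
    have h2 := le_antisymm h1 ENNReal.toReal_nonneg
    exact ((ENNReal.toReal_eq_zero_iff _).1 h2).resolve_right (measure_ne_top _ _)
  refine ⟨h0, fun hpos r hr => ?_⟩
  by_contra hne
  obtain ⟨y, hy⟩ := (Set.ne_univ_iff_exists_notMem _).1 hne
  have hp := hpos (Metric.ball y (r - δ)) Metric.isOpen_ball
    ⟨y, Metric.mem_ball_self (sub_pos.2 hr)⟩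
  refine hp.ne' (measure_mono_null ?_ h0)
  intro z hz hzF
  apply hy
  simp only [nbhd, Set.mem_iUnion, Metric.mem_ball, exists_prop] at hz hzF ⊢
  obtain ⟨a, ha, hza⟩ := hzF
  refine ⟨a, ha, ?_⟩
  have := dist_triangle_left y a z
  linarith
end
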